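/- arXiv:math/9905184 — 5 statements merged into one kernel-verified Lean document; each statement's English description precedes it below -/
import Mathlib

section
/- Let n = rd with r ≥ 2 and let ℂ^n = E_1 ⊕ ⋯ ⊕ E_r be a direct sum decomposition into d-dimensional subspaces. If V and V' are two d-dimensional subspaces of ℂ^n, each in general position with respect to (E_1,…,E_r), then there exists g ∈ GL_n(ℂ) with g(E_i) = E_i for all i = 1,…,r and g(V) = V'. -/
noncomputable section

open Module

/-- `V` is in general position with respect to the decomposition
`ℂⁿ = E 0 ⊕ ⋯ ⊕ E (r-1)`: for each `i`, the projection `πᵢ` onto `E i` (whose kernel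
is the sum of the other summands) restricts to a bijection from `V` onto `E i`. -/
def GenPos {n r : ℕ} (E : Fin r → Submodule ℂ (Fin n → ℂ))
    (V : Submodule ℂ (Fin n → ℂ)) : Prop :=
  ∀ i : Fin r, ∀ w ∈ E i, ∃! v, v ∈ V ∧ v - w ∈ ⨆ j, ⨆ (_ : j ≠ i), E j

/-!
If the projections of `V` and of `V'` onto each `E i` are bijective, then both subspaces are
isomorphic to `E i`, hence to each other. An isomorphism `T : V ≃ V'`, read through the two
projections to `E i`, becomes an automorphism of `E i`, and the direct sum `g` of these
automorphisms restricts to `T` on `V`, because it does so in every coordinate.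
-/

section Decomposition

open DirectSum

variable {R M N ι : Type*} [Semiring R] [AddCommMonoid M] [Module R M]
  [AddCommMonoid N] [Module R N] [DecidableEq ι]

theorem submodule_map_eq_of_surjective_restrict {p : Submodule R M} {q : Submodule R N}
    {f : M →ₗ[R] N} {T : p → q} (hT : Function.Surjective T) (h : ∀ x : p, f x = T x) :
    p.map f = q := by
  refine le_antisymm ?_ fun y hy => ?_
  · rintro _ ⟨x, hx, rfl⟩
    exact h ⟨x, hx⟩ ▸ (T ⟨x, hx⟩).2
  · obtain ⟨x, hx⟩ := hT ⟨y, hy⟩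
    exact ⟨x, x.2, (h x).trans (congrArg Subtype.val hx)⟩

variable (E : ι → Submodule R M) [Decomposition E] (F : ι → Submodule R N) [Decomposition F]

/-- The projection `πᵢ` onto the summand `E i` along the other summands. -/
def summandProj (i : ι) : M →ₗ[R] E i :=
  component R ι (fun i => E i) i ∘ₗ (decomposeLinearEquiv E).toLinearMap

theorem summandProj_apply (i : ι) (x : M) : summandProj E i x = decompose E x i := rfl

theorem summandProj_coe {i : ι} (x : E i) : summandProj E i x = x :=
  Subtype.ext (decompose_of_mem_same E x.2)

theorem ker_summandProj (i : ι) : LinearMap.ker (summandProj E i) = ⨆ j ≠ i, E j := by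
  classical
  refine le_antisymm (fun x hx => ?_) (iSup₂_le fun j hj x hx => ?_)
  · rw [LinearMap.mem_ker, summandProj_apply] at hx
    rw [← sum_support_decompose E x]
    refine Submodule.sum_mem _ fun j hj => ?_
    have hji : j ≠ i := by
      rintro rfl
      exact DFinsupp.mem_support_iff.1 hj hx
    exact Submodule.mem_iSup_of_mem j (Submodule.mem_iSup_of_mem hji (decompose E x j).2)
  · exact Subtype.ext (decompose_of_mem_ne E hx hj)

variable {E F}

/-- The direct sum of isomorphisms between corresponding summands of two decompositions. -/
def summandCongr (h : ∀ i, E i ≃ₗ[R] F i) : M ≃ₗ[R] N :=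
  decomposeLinearEquiv E ≪≫ₗ congrLinearEquiv h ≪≫ₗ (decomposeLinearEquiv F).symm

theorem summandCongr_coe (h : ∀ i, E i ≃ₗ[R] F i) {i : ι} (x : E i) :
    summandCongr h x = h i x := by
  simp [summandCongr, coe_congrLinearEquiv]

theorem summandCongr_eq_iff (h : ∀ i, E i ≃ₗ[R] F i) {x : M} {y : N} :
    summandCongr h x = y ↔ ∀ i, h i (summandProj E i x) = summandProj F i y :=
  (LinearEquiv.symm_apply_eq _).trans DFinsupp.ext_iff

variable (E) in
/-- A submodule is in general position with respect to a decomposition if it projects bijectively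
onto each summand. -/
def InGeneralPosition (V : Submodule R M) : Prop :=
  ∀ i, Function.Bijective ((summandProj E i).domRestrict V)

namespace InGeneralPosition

variable {V : Submodule R M} {W : Submodule R N}

/-- The isomorphism from a submodule in general position onto a summand given by projection. -/
def equivSummand (hV : InGeneralPosition E V) (i : ι) : V ≃ₗ[R] E i :=
  LinearEquiv.ofBijective _ (hV i)

theorem equivSummand_apply (hV : InGeneralPosition E V) (i : ι) (v : V) :
    hV.equivSummand i v = summandProj E i v := rfl

theorem exists_linearEquiv_extending (hV : InGeneralPosition E V) (hW : InGeneralPosition F W)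
    (T : V ≃ₗ[R] W) :
    ∃ g : M ≃ₗ[R] N, (∀ i, (E i).map g.toLinearMap = F i) ∧ ∀ v : V, g v = T v := by
  let h (i : ι) : E i ≃ₗ[R] F i := (hV.equivSummand i).symm ≪≫ₗ T ≪≫ₗ hW.equivSummand i
  refine ⟨summandCongr h,
    fun i => submodule_map_eq_of_surjective_restrict (h i).surjective (summandCongr_coe h),
    fun v => (summandCongr_eq_iff h).2 fun i => ?_⟩
  rw [← equivSummand_apply hV, ← equivSummand_apply hW]
  simp only [h, LinearEquiv.trans_apply, LinearEquiv.symm_apply_apply]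

theorem nonempty_linearEquiv {V' : Submodule R M} (hV : InGeneralPosition E V)
    (hV' : InGeneralPosition E V') : Nonempty (V ≃ₗ[R] V') := by
  cases isEmpty_or_nonempty ι with
  | inl _ =>
    have : Subsingleton M := (decompose E).subsingleton
    exact ⟨LinearEquiv.ofEq V V' (Subsingleton.elim V V')⟩
  | inr hι =>
    obtain ⟨i⟩ := hι
    exact ⟨hV.equivSummand i ≪≫ₗ (hV'.equivSummand i).symm⟩

end InGeneralPosition

theorem stmt2_general {V V' : Submodule R M} (hV : InGeneralPosition E V)
    (hV' : InGeneralPosition E V') :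
    ∃ g : M ≃ₗ[R] M, (∀ i, (E i).map g.toLinearMap = E i) ∧ V.map g.toLinearMap = V' := by
  obtain ⟨T⟩ := hV.nonempty_linearEquiv hV'
  obtain ⟨g, hgE, hgV⟩ := hV.exists_linearEquiv_extending hV' T
  exact ⟨g, hgE, submodule_map_eq_of_surjective_restrict T.surjective hgV⟩

end Decomposition

theorem genPos_iff_inGeneralPosition {n r : ℕ} (E : Fin r → Submodule ℂ (Fin n → ℂ))
    [DirectSum.Decomposition E] (V : Submodule ℂ (Fin n → ℂ)) :
    GenPos E V ↔ InGeneralPosition E V := by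
  refine forall_congr' fun i => ?_
  have hproj (w : E i) (v : Fin n → ℂ) :
      v - w ∈ ⨆ j ≠ i, E j ↔ summandProj E i v = w := by
    rw [← ker_summandProj, LinearMap.sub_mem_ker_iff, summandProj_coe]
  rw [Function.bijective_iff_existsUnique, Subtype.forall']
  refine forall_congr' fun w => ?_
  simp only [hproj, LinearMap.domRestrict_apply, ExistsUnique, Subtype.exists, Subtype.forall,
    Subtype.mk.injEq, and_imp, exists_prop, and_assoc]

theorem stmt2 (n d r : ℕ) (hd : 0 < d) (hr : 2 ≤ r) (hn : n = r * d)
    (E : Fin r → Submodule ℂ (Fin n → ℂ))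
    (hdim : ∀ i, finrank ℂ (E i) = d)
    (hdecomp : DirectSum.IsInternal E)
    (V V' : Submodule ℂ (Fin n → ℂ))
    (hV : finrank ℂ V = d) (hV' : finrank ℂ V' = d)
    (hgp : GenPos E V) (hgp' : GenPos E V') :
    ∃ g : (Fin n → ℂ) ≃ₗ[ℂ] (Fin n → ℂ),
      (∀ i, (E i).map g.toLinearMap = E i) ∧ V.map g.toLinearMap = V' := by
  let := hdecomp.chooseDecomposition
  exact stmt2_general ((genPos_iff_inGeneralPosition E V).1 hgp)
    ((genPos_iff_inGeneralPosition E V').1 hgp')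
end
end

section
/- Let n = (2r+1)e and d = 2e for positive integers r, e, and let E_1,…,E_r be independent d-dimensional subspaces of ℂ^n with F := E_1 ⊕ ⋯ ⊕ E_r. If V and V' are two d-dimensional subspaces of ℂ^n, each in general position with respect to (E_1,…,E_r), then there exists g ∈ GL_n(ℂ) with g(E_i) = E_i for all i = 1,…,r and g(V) = V'. -/
noncomputable section

open Module

/-- The family `E` is independent: the natural sum map is injective,
i.e. `F = E 0 + ⋯ + E (r-1)` is a direct sum. -/
def IndepFam {n r : ℕ} (E : Fin r → Submodule ℂ (Fin n → ℂ)) : Prop :=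
  Function.Injective fun f : (i : Fin r) → E i => ∑ i, (f i : Fin n → ℂ)

/-- General position of `V` with respect to independent subspaces `E 0, …, E (r-1)`
(case `n = (2r+1)e`, `d = 2e`): the intersection `W = V ⊓ F` with `F = ⨆ i, E i`
has dimension `e`, and for each `i` the projection of `F` onto `E i` (whose kernel
is `⨆ j ≠ i, E j`) restricts to an injective map on `W`. -/
def GenPosHalf {n r : ℕ} (e : ℕ) (E : Fin r → Submodule ℂ (Fin n → ℂ))
    (V : Submodule ℂ (Fin n → ℂ)) : Prop :=
  finrank ℂ (V ⊓ (⨆ i, E i) : Submodule ℂ (Fin n → ℂ)) = e ∧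
    ∀ i : Fin r, (V ⊓ (⨆ j, E j)) ⊓ (⨆ j, ⨆ (_ : j ≠ i), E j) = ⊥

/-! Let `W = V ⊓ F` and `W' = V' ⊓ F`. Each coordinate `W → E i` is injective, so an isomorphism
`W ≃ W'` prescribes, for every `i` separately, an isomorphism between two finite-dimensional
subspaces of `E i`, which extends to an automorphism of `E i`. These automorphisms assemble into one
of `F`, hence into one of the whole space, which preserves every `E i` and carries `W` onto `W'`.
This reduces the problem to `W = W'`, where complements of `W` in `V` and in `V'` are both disjoint
from `F`, and some automorphism fixing `F` pointwise carries the one onto the other.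
-/

section

variable {K M : Type*} [DivisionRing K] [AddCommGroup M] [Module K M]

theorem map_eq_of_forall_apply_eq {p q : Submodule K M} (g : M ≃ₗ[K] M) (e : p ≃ₗ[K] q)
    (h : ∀ x : p, g x = e x) : p.map g.toLinearMap = q := by
  have hcomp : g.toLinearMap ∘ₗ p.subtype = q.subtype ∘ₗ e.toLinearMap := LinearMap.ext h
  rw [← p.range_subtype, ← LinearMap.range_comp, hcomp,
    LinearMap.range_comp_of_range_eq_top _ e.range, q.range_subtype]

theorem exists_linearEquiv_comp_eq {W : Type*} [AddCommGroup W] [Module K W]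
    [FiniteDimensional K W] {f g : W →ₗ[K] M} (hf : Function.Injective f)
    (hg : Function.Injective g) : ∃ a : M ≃ₗ[K] M, ∀ w, a (f w) = g w := by
  obtain ⟨a, ha⟩ := Submodule.exists_linearEquiv_restrict_eq
    ((LinearEquiv.ofInjective f hf).symm ≪≫ₗ LinearEquiv.ofInjective g hg)
  refine ⟨a, fun w => ?_⟩
  simpa using (ha (LinearEquiv.ofInjective f hf w)).symm

theorem exists_linearEquiv_of_isCompl {p q p' q' : Submodule K M} (h : IsCompl p q)
    (h' : IsCompl p' q') (e₁ : p ≃ₗ[K] p') (e₂ : q ≃ₗ[K] q') :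
    ∃ g : M ≃ₗ[K] M, (∀ x : p, g x = e₁ x) ∧ ∀ x : q, g x = e₂ x :=
  ⟨(p.prodEquivOfIsCompl q h).symm ≪≫ₗ e₁.prodCongr e₂ ≪≫ₗ p'.prodEquivOfIsCompl q' h',
    fun x => by simp, fun x => by simp⟩

theorem exists_linearEquiv_fixing_extending {F C C' : Submodule K M} [FiniteDimensional K C]
    (hC : Disjoint F C) (hC' : Disjoint F C') (c : C ≃ₗ[K] C') :
    ∃ g : M ≃ₗ[K] M, (∀ x ∈ F, g x = x) ∧ ∀ x : C, g x = c x := by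
  obtain ⟨Q, hCQ, hQ⟩ := hC.symm.exists_isCompl
  obtain ⟨Q', hCQ', hQ'⟩ := hC'.symm.exists_isCompl
  let q : Q ≃ₗ[K] Q' :=
    (F.quotientEquivOfIsCompl Q hQ.symm).symm ≪≫ₗ F.quotientEquivOfIsCompl Q' hQ'.symm
  obtain ⟨a, ha⟩ := exists_linearEquiv_comp_eq
    (f := q.toLinearMap ∘ₗ Submodule.inclusion hCQ)
    (g := Submodule.inclusion hCQ' ∘ₗ c.toLinearMap)
    (q.injective.comp (Submodule.inclusion_injective hCQ))
    ((Submodule.inclusion_injective hCQ').comp c.injective)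
  obtain ⟨g, hgF, hgQ⟩ := exists_linearEquiv_of_isCompl hQ.symm hQ'.symm (.refl K F) (q ≪≫ₗ a)
  refine ⟨g, fun x hx => hgF ⟨x, hx⟩, fun x => ?_⟩
  exact (hgQ (Submodule.inclusion hCQ x)).trans (congrArg Subtype.val (ha x))

theorem finrank_add_finrank_of_disjoint_of_sup_eq {p q V : Submodule K M} [FiniteDimensional K V]
    (hdisj : Disjoint p q) (hsup : p ⊔ q = V) : finrank K p + finrank K q = finrank K V := by
  have : FiniteDimensional K p := Submodule.finiteDimensional_of_le (hsup ▸ le_sup_left)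
  have : FiniteDimensional K q := Submodule.finiteDimensional_of_le (hsup ▸ le_sup_right)
  rw [← hsup, ← Submodule.finrank_sup_add_finrank_inf_eq, hdisj.eq_bot, finrank_bot, add_zero]

theorem exists_linearEquiv_fixing_map_eq {F V V' : Submodule K M} [FiniteDimensional K V]
    [FiniteDimensional K V'] (hinf : V ⊓ F = V' ⊓ F) (hrank : finrank K V = finrank K V') :
    ∃ g : M ≃ₗ[K] M, (∀ x ∈ F, g x = x) ∧ V.map g.toLinearMap = V' := by
  obtain ⟨C, hC, hsup⟩ := IsModularLattice.exists_disjoint_and_sup_eq (inf_le_left : V ⊓ F ≤ V)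
  obtain ⟨C', hC', hsup'⟩ := IsModularLattice.exists_disjoint_and_sup_eq (inf_le_left : V' ⊓ F ≤ V')
  have hCV : C ≤ V := hsup ▸ le_sup_right
  have hCV' : C' ≤ V' := hsup' ▸ le_sup_right
  have : FiniteDimensional K C := Submodule.finiteDimensional_of_le hCV
  have : FiniteDimensional K C' := Submodule.finiteDimensional_of_le hCV'
  have hrankC : finrank K C = finrank K C' := by
    have h := finrank_add_finrank_of_disjoint_of_sup_eq hC hsup
    have h' := finrank_add_finrank_of_disjoint_of_sup_eq hC' hsup'
    rw [hinf] at h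
    omega
  have hFC {U D : Submodule K M} (hD : Disjoint (U ⊓ F) D) (hDU : D ≤ U) : Disjoint F D := by
    rwa [disjoint_iff, inf_right_comm, inf_eq_right.mpr hDU, inf_comm, ← disjoint_iff] at hD
  let c : C ≃ₗ[K] C' := .ofFinrankEq _ _ hrankC
  obtain ⟨g, hgF, hgC⟩ := exists_linearEquiv_fixing_extending (hFC hC hCV) (hFC hC' hCV') c
  have hgW : (V ⊓ F).map g.toLinearMap = V' ⊓ F :=
    map_eq_of_forall_apply_eq g (.ofEq _ _ hinf) fun x => hgF x x.2.2
  refine ⟨g, hgF, ?_⟩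
  rw [← hsup, Submodule.map_sup, hgW, map_eq_of_forall_apply_eq g c hgC, hsup']

end

section

variable {K M ι : Type*} [DivisionRing K] [AddCommGroup M] [Module K M] [DecidableEq ι]
  {E : ι → Submodule K M}

/-- The isomorphism of the external direct sum of an independent family of subspaces onto their
internal sum, giving vectors of `⨆ i, E i` coordinates in the `E i`. -/
def dfinsuppEquivISup (hE : iSupIndep E) : (Π₀ i, E i) ≃ₗ[K] ↥(⨆ i, E i) :=
  .ofInjective _ hE.dfinsupp_lsum_injective ≪≫ₗ
    .ofEq _ _ (Submodule.iSup_eq_range_dfinsupp_lsum E).symm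

theorem coe_dfinsuppEquivISup (hE : iSupIndep E) (f : Π₀ i, E i) :
    (dfinsuppEquivISup hE f : M) = DFinsupp.lsum ℕ (fun i => (E i).subtype) f :=
  rfl

theorem dfinsuppEquivISup_single (hE : iSupIndep E) (i : ι) (x : E i) :
    (dfinsuppEquivISup hE (.single i x) : M) = x := by
  simp [coe_dfinsuppEquivISup]

theorem mem_iSup_ne_of_dfinsuppEquivISup_symm_eq_zero (hE : iSupIndep E) {i : ι}
    {x : ↥(⨆ i, E i)} (hx : (dfinsuppEquivISup hE).symm x i = 0) : (x : M) ∈ ⨆ j ≠ i, E j := by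
  obtain ⟨f, rfl⟩ := (dfinsuppEquivISup hE).surjective x
  rw [LinearEquiv.symm_apply_apply] at hx
  refine (Submodule.mem_biSup_iff_exists_dfinsupp (· ≠ i) E _).mpr ⟨f, ?_⟩
  have hf : f.filter (· ≠ i) = f := by
    ext j
    by_cases hj : j = i
    · subst hj
      simp [hx]
    · simp [hj]
  rw [hf, coe_dfinsuppEquivISup]

/-- The coordinates along `E i` of the vectors of a subspace `W` of `⨆ i, E i`. -/
def coordinate (hE : iSupIndep E) {W : Submodule K M} (hW : W ≤ ⨆ i, E i) (i : ι) : W →ₗ[K] E i :=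
  DFinsupp.lapply i ∘ₗ (dfinsuppEquivISup hE).symm.toLinearMap ∘ₗ Submodule.inclusion hW

theorem coordinate_injective (hE : iSupIndep E) {W : Submodule K M} (hW : W ≤ ⨆ i, E i) {i : ι}
    (hdisj : Disjoint W (⨆ j ≠ i, E j)) : Function.Injective (coordinate hE hW i) := by
  refine (injective_iff_map_eq_zero _).mpr fun w hw => Subtype.ext ?_
  exact Submodule.disjoint_def.mp hdisj w w.2 (mem_iSup_ne_of_dfinsuppEquivISup_symm_eq_zero hE hw)

theorem exists_linearEquiv_map_eq_of_coordinate_eq (hE : iSupIndep E) (a : ∀ i, E i ≃ₗ[K] E i)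
    {W W' : Submodule K M} (hW : W ≤ ⨆ i, E i) (hW' : W' ≤ ⨆ i, E i) (φ : W ≃ₗ[K] W')
    (hφ : ∀ i w, a i (coordinate hE hW i w) = coordinate hE hW' i (φ w)) :
    ∃ g : M ≃ₗ[K] M, (∀ i, (E i).map g.toLinearMap = E i) ∧ W.map g.toLinearMap = W' := by
  let L := dfinsuppEquivISup hE
  let A := L.symm ≪≫ₗ DFinsupp.mapRange.linearEquiv a ≪≫ₗ L
  obtain ⟨Q, hQ⟩ := (⨆ i, E i).exists_isCompl
  obtain ⟨g, hgF, -⟩ := exists_linearEquiv_of_isCompl hQ hQ A (.refl K Q)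
  have hgL (f : Π₀ i, E i) : g (L f) = L (DFinsupp.mapRange.linearEquiv a f) := by
    simp [hgF, A]
  refine ⟨g, fun i => map_eq_of_forall_apply_eq g (a i) fun x => ?_,
    map_eq_of_forall_apply_eq g φ fun w => ?_⟩
  · simpa [L, dfinsuppEquivISup_single] using hgL (.single i x)
  · have hcoord : DFinsupp.mapRange.linearEquiv a (L.symm (Submodule.inclusion hW w)) =
        L.symm (Submodule.inclusion hW' (φ w)) := DFinsupp.ext fun i => hφ i w
    simpa [hcoord] using hgL (L.symm (Submodule.inclusion hW w))

end

section

variable {K M ι : Type*} [DivisionRing K] [AddCommGroup M] [Module K M] {E : ι → Submodule K M}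

theorem exists_linearEquiv_map_eq_of_le_iSup (hE : iSupIndep E) {W W' : Submodule K M}
    [FiniteDimensional K W] (hW : W ≤ ⨆ i, E i) (hW' : W' ≤ ⨆ i, E i)
    (hdisj : ∀ i, Disjoint W (⨆ j ≠ i, E j)) (hdisj' : ∀ i, Disjoint W' (⨆ j ≠ i, E j))
    (φ : W ≃ₗ[K] W') :
    ∃ g : M ≃ₗ[K] M, (∀ i, (E i).map g.toLinearMap = E i) ∧ W.map g.toLinearMap = W' := by
  classical
  have hext (i : ι) : ∃ a : E i ≃ₗ[K] E i,
      ∀ w, a (coordinate hE hW i w) = coordinate hE hW' i (φ w) :=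
    exists_linearEquiv_comp_eq (g := coordinate hE hW' i ∘ₗ φ.toLinearMap)
      (coordinate_injective hE hW (hdisj i))
      ((coordinate_injective hE hW' (hdisj' i)).comp φ.injective)
  choose a ha using hext
  exact exists_linearEquiv_map_eq_of_coordinate_eq hE a hW hW' φ ha

theorem stmt7_general (hE : iSupIndep E) {V V' : Submodule K M} [FiniteDimensional K V]
    [FiniteDimensional K V'] (hrank : finrank K V = finrank K V')
    (hrank_inf : finrank K ↥(V ⊓ ⨆ i, E i) = finrank K ↥(V' ⊓ ⨆ i, E i))
    (hdisj : ∀ i, Disjoint V (⨆ j ≠ i, E j)) (hdisj' : ∀ i, Disjoint V' (⨆ j ≠ i, E j)) :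
    ∃ g : M ≃ₗ[K] M, (∀ i, (E i).map g.toLinearMap = E i) ∧ V.map g.toLinearMap = V' := by
  obtain ⟨g, hgE, hgW⟩ := exists_linearEquiv_map_eq_of_le_iSup hE inf_le_right inf_le_right
    (fun i => (hdisj i).mono_left inf_le_left) (fun i => (hdisj' i).mono_left inf_le_left)
    (LinearEquiv.ofFinrankEq _ _ hrank_inf)
  have hgF : (⨆ i, E i).map g.toLinearMap = ⨆ i, E i := by
    simp only [Submodule.map_iSup, hgE]
  have hinf : V.map g.toLinearMap ⊓ ⨆ i, E i = V' ⊓ ⨆ i, E i := by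
    rw [← hgW, Submodule.map_inf _ g.injective, hgF]
  obtain ⟨h, hhF, hhV⟩ := exists_linearEquiv_fixing_map_eq hinf
    ((LinearEquiv.finrank_map_eq g V).trans hrank)
  have hhE (i : ι) : (E i).map h.toLinearMap = E i :=
    map_eq_of_forall_apply_eq h (.refl K _) fun x => hhF x (Submodule.mem_iSup_of_mem i x.2)
  refine ⟨g ≪≫ₗ h, fun i => ?_, ?_⟩
  · rw [LinearEquiv.coe_trans, Submodule.map_comp, hgE, hhE]
  · rw [LinearEquiv.coe_trans, Submodule.map_comp, hhV]

end

theorem IndepFam.iSupIndep {n r : ℕ} {E : Fin r → Submodule ℂ (Fin n → ℂ)} (hE : IndepFam E) :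
    iSupIndep E := by
  refine iSupIndep_of_dfinsupp_lsum_injective E fun f g hfg => DFunLike.coe_injective (hE ?_)
  simpa [DFinsupp.lsum_apply_apply, DFinsupp.sumAddHom_apply, DFinsupp.sum_eq_sum_fintype] using hfg

theorem GenPosHalf.disjoint {n r e : ℕ} {E : Fin r → Submodule ℂ (Fin n → ℂ)}
    {V : Submodule ℂ (Fin n → ℂ)} (hV : GenPosHalf e E V) (i : Fin r) :
    Disjoint V (⨆ j ≠ i, E j) := by
  have hle : ⨆ j ≠ i, E j ≤ ⨆ j, E j := iSup_mono fun j => iSup_le fun _ => le_rfl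
  rw [disjoint_iff, ← inf_eq_right.mpr hle, ← inf_assoc]
  exact hV.2 i

theorem stmt7 (r e : ℕ) (hr : 0 < r) (he : 0 < e) (n d : ℕ)
    (hn : n = (2 * r + 1) * e) (hd : d = 2 * e)
    (E : Fin r → Submodule ℂ (Fin n → ℂ))
    (hdim : ∀ i, finrank ℂ (E i) = d)
    (hind : IndepFam E)
    (V V' : Submodule ℂ (Fin n → ℂ))
    (hV : finrank ℂ V = d) (hV' : finrank ℂ V' = d)
    (hgp : GenPosHalf e E V) (hgp' : GenPosHalf e E V') :
    ∃ g : (Fin n → ℂ) ≃ₗ[ℂ] (Fin n → ℂ),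
      (∀ i, (E i).map g.toLinearMap = E i) ∧ V.map g.toLinearMap = V' := by
  exact stmt7_general hind.iSupIndep (hV.trans hV'.symm) (hgp.1.trans hgp'.1.symm)
    hgp.disjoint hgp'.disjoint
end
end

section
/- Let e be a positive integer and let E_1, E_2, E_3 be 2e-dimensional subspaces of ℂ^{3e} with dim(E_i ∩ E_j) = e for all i < j and E_1 ∩ E_2 ∩ E_3 = {0}; set A := E_1 ∩ E_2, A_1 := E_1 ∩ E_3, A_2 := E_2 ∩ E_3. Let B_1, C_1 ⊆ E_1 and B_2, C_2 ⊆ E_2 be e-dimensional subspaces such that B_j ∩ A = B_j ∩ A_j = {0} and C_j ∩ A = C_j ∩ A_j = {0} for j = 1, 2. Then there exists g ∈ GL_{3e}(ℂ) with g(E_j) = E_j for j = 1, 2, 3, with g restricting to the identity on A, and with g(B_1) = C_1 and g(B_2) = C_2. -/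
noncomputable section

open Module

/-!
Write `A`, `A₁`, `A₂` for the pairwise intersections of `E₁`, `E₂`, `E₃`. A common complement `B₁`
of `A` and `A₁` in `E₁ = A ⊕ A₁` is the graph `{a - φ a}` of an isomorphism `φ : A ≃ A₁`, namely the
composite `A ≃ E₁ / B₁ ≃ A₁`. If `C₁` is the graph of `ψ` in the same way, then extending
`ψ ∘ φ⁻¹` on `A₁` by the identity on a complement of `A₁` containing `E₂` gives an automorphism that
fixes `E₂` pointwise, preserves `A₁` and sends `B₁` to `C₁`. Composing it with the analogous
automorphism for the index `2`, which fixes `E₁` pointwise, gives `g`.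
-/

section Ring

variable {R V : Type*} [Ring R] [AddCommGroup V] [Module R V] {A A' B C F : Submodule R V}

/-- Perspectivity in the sense of lattice theory: `A` and `A'` are perspective with axis `B` if both
are complements of `B` in the same submodule `A ⊔ B = A' ⊔ B`. -/
structure IsPerspective (B A A' : Submodule R V) : Prop where
  disjoint_left : Disjoint A B
  disjoint_right : Disjoint A' B
  sup_eq_sup : A ⊔ B = A' ⊔ B

theorem map_mkQ_eq_map_mkQ (h : A ⊔ B = A' ⊔ B) : A.map B.mkQ = A'.map B.mkQ := by
  apply Submodule.comap_injective_of_surjective B.mkQ_surjective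
  rw [Submodule.comap_map_mkQ, Submodule.comap_map_mkQ, sup_comm, h, sup_comm]

/-- The image of `A` in `V ⧸ B` is isomorphic to `A` when `A` and `B` are disjoint. -/
def equivMapMkQ (h : Disjoint A B) : A ≃ₗ[R] A.map B.mkQ :=
  (LinearEquiv.ofInjective (B.mkQ.domRestrict A) <| by
    rwa [LinearMap.injective_domRestrict_iff, Submodule.ker_mkQ]) ≪≫ₗ
    LinearEquiv.ofEq _ _ (LinearMap.range_domRestrict A B.mkQ)

namespace IsPerspective

/-- The perspectivity `A ≃ A'` with axis `B`, that is, the composite `A ≃ (A ⊔ B) / B ≃ A'`. -/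
def equiv (h : IsPerspective B A A') : A ≃ₗ[R] A' :=
  equivMapMkQ h.disjoint_left ≪≫ₗ LinearEquiv.ofEq _ _ (map_mkQ_eq_map_mkQ h.sup_eq_sup) ≪≫ₗ
    (equivMapMkQ h.disjoint_right).symm

theorem sub_equiv_mem (h : IsPerspective B A A') (a : A) : (a : V) - h.equiv a ∈ B := by
  have hquot : equivMapMkQ h.disjoint_right (h.equiv a) =
      LinearEquiv.ofEq _ _ (map_mkQ_eq_map_mkQ h.sup_eq_sup) (equivMapMkQ h.disjoint_left a) := by
    simp only [equiv, LinearEquiv.trans_apply, LinearEquiv.apply_symm_apply]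
  exact (Submodule.Quotient.eq B).1 (congrArg Subtype.val hquot).symm

theorem equiv_eq_of_sub_mem (h : IsPerspective B A A') {a : A} {a' : A'}
    (ha : (a : V) - a' ∈ B) : h.equiv a = a' := by
  have hmem : ((h.equiv a - a' : A') : V) ∈ B := by
    simpa using B.sub_mem ha (h.sub_equiv_mem a)
  have hzero := Submodule.disjoint_def.1 h.disjoint_right _ (h.equiv a - a').2 hmem
  exact sub_eq_zero.1 (Subtype.ext hzero)

theorem range_subtype_sub_equiv (h : IsPerspective B A A') (hB : B ≤ A ⊔ A') :
    LinearMap.range (A.subtype - A'.subtype ∘ₗ h.equiv.toLinearMap) = B := by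
  apply le_antisymm
  · rintro _ ⟨a, rfl⟩
    exact h.sub_equiv_mem a
  · intro b hb
    obtain ⟨a, ha, a', ha', rfl⟩ := Submodule.mem_sup.1 (hB hb)
    have heq : h.equiv ⟨a, ha⟩ = -⟨a', ha'⟩ := h.equiv_eq_of_sub_mem (by simpa using hb)
    exact ⟨⟨a, ha⟩, by simp [heq]⟩

end IsPerspective

/-- The automorphism of `V = A ⊕ F` extending an automorphism of `A` by the identity on `F`. -/
def extendByRefl (h : IsCompl A F) (u : A ≃ₗ[R] A) : V ≃ₗ[R] V :=
  (A.prodEquivOfIsCompl F h).symm ≪≫ₗ u.prodCongr (.refl R F) ≪≫ₗ A.prodEquivOfIsCompl F h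

theorem extendByRefl_apply_left (h : IsCompl A F) (u : A ≃ₗ[R] A) (x : A) :
    extendByRefl h u x = u x := by
  simp [extendByRefl, -Submodule.prodEquivOfIsCompl_symm_apply,
    Submodule.prodEquivOfIsCompl_symm_apply_left]

theorem extendByRefl_apply_of_mem_right (h : IsCompl A F) (u : A ≃ₗ[R] A) {x : V} (hx : x ∈ F) :
    extendByRefl h u x = x := by
  lift x to F using hx
  simp [extendByRefl, -Submodule.prodEquivOfIsCompl_symm_apply,
    Submodule.prodEquivOfIsCompl_symm_apply_right]

theorem map_extendByRefl_left (h : IsCompl A F) (u : A ≃ₗ[R] A) :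
    A.map (extendByRefl h u).toLinearMap = A := by
  have hcomp : (extendByRefl h u).toLinearMap ∘ₗ A.subtype = A.subtype ∘ₗ u.toLinearMap :=
    LinearMap.ext (extendByRefl_apply_left h u)
  calc A.map (extendByRefl h u).toLinearMap
      = LinearMap.range ((extendByRefl h u).toLinearMap ∘ₗ A.subtype) := by
        rw [LinearMap.range_comp, Submodule.range_subtype]
    _ = A := by
        rw [hcomp, LinearMap.range_comp, LinearEquiv.range, Submodule.map_top,
          Submodule.range_subtype]

theorem map_eq_self_of_forall_apply_eq {f : V →ₗ[R] V} (hf : ∀ x ∈ A, f x = x) : A.map f = A := by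
  ext x
  exact ⟨fun ⟨y, hy, hyx⟩ ↦ hyx ▸ (hf y hy).symm ▸ hy, fun hx ↦ ⟨x, hx, hf x hx⟩⟩

theorem IsPerspective.exists_linearEquiv_map_axis_eq (hB : IsPerspective B A A')
    (hC : IsPerspective C A A') (hB_le : B ≤ A ⊔ A') (hC_le : C ≤ A ⊔ A')
    (hF : IsCompl A' F) (hAF : A ≤ F) :
    ∃ g : V ≃ₗ[R] V, (∀ x ∈ F, g x = x) ∧ A'.map g.toLinearMap = A' ∧
      B.map g.toLinearMap = C := by
  set g := extendByRefl hF (hB.equiv.symm ≪≫ₗ hC.equiv)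
  have hg_right : ∀ x ∈ F, g x = x := fun x ↦ extendByRefl_apply_of_mem_right hF _
  have hg_graph : g.toLinearMap ∘ₗ (A.subtype - A'.subtype ∘ₗ hB.equiv.toLinearMap) =
      A.subtype - A'.subtype ∘ₗ hC.equiv.toLinearMap := by
    ext a
    have hg_equiv : g (hB.equiv a) = hC.equiv a := by simp [g, extendByRefl_apply_left]
    simp [hg_equiv, hg_right a (hAF a.2)]
  refine ⟨g, hg_right, map_extendByRefl_left hF _, ?_⟩
  rw [← hB.range_subtype_sub_equiv hB_le, ← LinearMap.range_comp, hg_graph,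
    hC.range_subtype_sub_equiv hC_le]

theorem exists_linearEquiv_map_axes_eq [IsSemisimpleModule R V]
    {A₁ A₂ B₁ B₂ C₁ C₂ : Submodule R V}
    (hA₁ : Disjoint (A ⊔ A₂) A₁) (hA₂ : Disjoint (A ⊔ A₁) A₂)
    (hB₁ : IsPerspective B₁ A A₁) (hC₁ : IsPerspective C₁ A A₁)
    (hB₂ : IsPerspective B₂ A A₂) (hC₂ : IsPerspective C₂ A A₂)
    (hB₁_le : B₁ ≤ A ⊔ A₁) (hC₁_le : C₁ ≤ A ⊔ A₁)
    (hB₂_le : B₂ ≤ A ⊔ A₂) (hC₂_le : C₂ ≤ A ⊔ A₂) :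
    ∃ g : V ≃ₗ[R] V, (∀ x ∈ A, g x = x) ∧
      A₁.map g.toLinearMap = A₁ ∧ A₂.map g.toLinearMap = A₂ ∧
      B₁.map g.toLinearMap = C₁ ∧ B₂.map g.toLinearMap = C₂ := by
  obtain ⟨F₁, hF₁, hcompl₁⟩ := hA₁.exists_isCompl
  obtain ⟨F₂, hF₂, hcompl₂⟩ := hA₂.exists_isCompl
  obtain ⟨g₁, hg₁_fix, hg₁A, hg₁B⟩ := hB₁.exists_linearEquiv_map_axis_eq hC₁ hB₁_le hC₁_le
    hcompl₁.symm (le_sup_left.trans hF₁)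
  obtain ⟨g₂, hg₂_fix, hg₂A, hg₂B⟩ := hB₂.exists_linearEquiv_map_axis_eq hC₂ hB₂_le hC₂_le
    hcompl₂.symm (le_sup_left.trans hF₂)
  have hg₁_map {S : Submodule R V} (hS : S ≤ A ⊔ A₂) : S.map g₁.toLinearMap = S :=
    map_eq_self_of_forall_apply_eq fun x hx ↦ hg₁_fix x (hF₁ (hS hx))
  have hg₂_map {S : Submodule R V} (hS : S ≤ A ⊔ A₁) : S.map g₂.toLinearMap = S :=
    map_eq_self_of_forall_apply_eq fun x hx ↦ hg₂_fix x (hF₂ (hS hx))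
  refine ⟨g₂ ≪≫ₗ g₁, fun x hx ↦ ?_, ?_, ?_, ?_, ?_⟩
  · rw [LinearEquiv.trans_apply, hg₂_fix x (hF₂ (Submodule.mem_sup_left hx)),
      hg₁_fix x (hF₁ (Submodule.mem_sup_left hx))]
  all_goals rw [LinearEquiv.coe_trans, Submodule.map_comp]
  · rw [hg₂_map le_sup_right, hg₁A]
  · rw [hg₂A, hg₁_map le_sup_right]
  · rw [hg₂_map hB₁_le, hg₁B]
  · rw [hg₂B, hg₁_map hC₂_le]

end Ring

section DivisionRing

variable {K V : Type*} [DivisionRing K] [AddCommGroup V] [Module K V] {A A' B E : Submodule K V}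

theorem sup_eq_of_disjoint_of_finrank_add_eq [FiniteDimensional K E] (hA : A ≤ E) (hB : B ≤ E)
    (hAB : Disjoint A B) (hdim : finrank K A + finrank K B = finrank K E) : A ⊔ B = E := by
  have : FiniteDimensional K A := Submodule.finiteDimensional_of_le hA
  have : FiniteDimensional K B := Submodule.finiteDimensional_of_le hB
  have hsup := Submodule.finrank_sup_add_finrank_inf_eq A B
  rw [hAB.eq_bot, finrank_bot, add_zero, hdim] at hsup
  exact Submodule.eq_of_le_of_finrank_eq (sup_le hA hB) hsup

theorem IsPerspective.of_finrank_add_eq [FiniteDimensional K E] (hA : A ≤ E) (hA' : A' ≤ E)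
    (hB : B ≤ E) (hBA : Disjoint B A) (hBA' : Disjoint B A')
    (hdim : finrank K A + finrank K B = finrank K E)
    (hdim' : finrank K A' + finrank K B = finrank K E) : IsPerspective B A A' where
  disjoint_left := hBA.symm
  disjoint_right := hBA'.symm
  sup_eq_sup := (sup_eq_of_disjoint_of_finrank_add_eq hA hB hBA.symm hdim).trans
    (sup_eq_of_disjoint_of_finrank_add_eq hA' hB hBA'.symm hdim').symm

end DivisionRing

theorem stmt12_general {K V : Type*} [DivisionRing K] [AddCommGroup V] [Module K V]
    (e : ℕ) (he : 0 < e) (E1 E2 E3 : Submodule K V)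
    (hd1 : finrank K E1 = 2 * e) (hd2 : finrank K E2 = 2 * e) (hd3 : finrank K E3 = 2 * e)
    (h12 : finrank K (E1 ⊓ E2 : Submodule K V) = e)
    (h13 : finrank K (E1 ⊓ E3 : Submodule K V) = e)
    (h23 : finrank K (E2 ⊓ E3 : Submodule K V) = e)
    (h123 : E1 ⊓ E2 ⊓ E3 = ⊥) (B1 C1 B2 C2 : Submodule K V)
    (hB1 : B1 ≤ E1) (hC1 : C1 ≤ E1) (hB2 : B2 ≤ E2) (hC2 : C2 ≤ E2)
    (hB1e : finrank K B1 = e) (hC1e : finrank K C1 = e)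
    (hB2e : finrank K B2 = e) (hC2e : finrank K C2 = e)
    (hB1A : B1 ⊓ (E1 ⊓ E2) = ⊥) (hB1A1 : B1 ⊓ (E1 ⊓ E3) = ⊥)
    (hB2A : B2 ⊓ (E1 ⊓ E2) = ⊥) (hB2A2 : B2 ⊓ (E2 ⊓ E3) = ⊥)
    (hC1A : C1 ⊓ (E1 ⊓ E2) = ⊥) (hC1A1 : C1 ⊓ (E1 ⊓ E3) = ⊥)
    (hC2A : C2 ⊓ (E1 ⊓ E2) = ⊥) (hC2A2 : C2 ⊓ (E2 ⊓ E3) = ⊥) :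
    ∃ g : V ≃ₗ[K] V,
      E1.map g.toLinearMap = E1 ∧ E2.map g.toLinearMap = E2 ∧ E3.map g.toLinearMap = E3 ∧
        (∀ x ∈ E1 ⊓ E2, g x = x) ∧
        B1.map g.toLinearMap = C1 ∧ B2.map g.toLinearMap = C2 := by
  have : FiniteDimensional K E1 := .of_finrank_pos (by omega)
  have : FiniteDimensional K E2 := .of_finrank_pos (by omega)
  have : FiniteDimensional K E3 := .of_finrank_pos (by omega)
  have hE2A1 : Disjoint E2 (E1 ⊓ E3) := disjoint_iff.2 (by rw [inf_left_comm, ← inf_assoc, h123])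
  have hE1A2 : Disjoint E1 (E2 ⊓ E3) := disjoint_iff.2 (by rw [← inf_assoc, h123])
  have hE1 : E1 ⊓ E2 ⊔ E1 ⊓ E3 = E1 := sup_eq_of_disjoint_of_finrank_add_eq
    inf_le_left inf_le_left (hE2A1.mono_left inf_le_right) (by omega)
  have hE2 : E1 ⊓ E2 ⊔ E2 ⊓ E3 = E2 := sup_eq_of_disjoint_of_finrank_add_eq
    inf_le_right inf_le_left (hE1A2.mono_left inf_le_left) (by omega)
  have hE3 : E1 ⊓ E3 ⊔ E2 ⊓ E3 = E3 := sup_eq_of_disjoint_of_finrank_add_eq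
    inf_le_right inf_le_right (hE1A2.mono_left inf_le_left) (by omega)
  have hpersp1 {S : Submodule K V} (hS : S ≤ E1) (hSe : finrank K S = e)
      (hSA : S ⊓ (E1 ⊓ E2) = ⊥) (hSA1 : S ⊓ (E1 ⊓ E3) = ⊥) :
      IsPerspective S (E1 ⊓ E2) (E1 ⊓ E3) :=
    .of_finrank_add_eq inf_le_left inf_le_left hS (disjoint_iff.2 hSA) (disjoint_iff.2 hSA1)
      (by omega) (by omega)
  have hpersp2 {S : Submodule K V} (hS : S ≤ E2) (hSe : finrank K S = e)
      (hSA : S ⊓ (E1 ⊓ E2) = ⊥) (hSA2 : S ⊓ (E2 ⊓ E3) = ⊥) :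
      IsPerspective S (E1 ⊓ E2) (E2 ⊓ E3) :=
    .of_finrank_add_eq inf_le_right inf_le_left hS (disjoint_iff.2 hSA) (disjoint_iff.2 hSA2)
      (by omega) (by omega)
  obtain ⟨g, hgA, hgA1, hgA2, hgB1, hgB2⟩ := exists_linearEquiv_map_axes_eq
    (hE2.symm ▸ hE2A1) (hE1.symm ▸ hE1A2)
    (hpersp1 hB1 hB1e hB1A hB1A1) (hpersp1 hC1 hC1e hC1A hC1A1)
    (hpersp2 hB2 hB2e hB2A hB2A2) (hpersp2 hC2 hC2e hC2A hC2A2)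
    (hB1.trans_eq hE1.symm) (hC1.trans_eq hE1.symm)
    (hB2.trans_eq hE2.symm) (hC2.trans_eq hE2.symm)
  have hgA_map : (E1 ⊓ E2).map g.toLinearMap = E1 ⊓ E2 := map_eq_self_of_forall_apply_eq hgA
  have hg_sup {S T : Submodule K V} (hS : S.map g.toLinearMap = S)
      (hT : T.map g.toLinearMap = T) : (S ⊔ T).map g.toLinearMap = S ⊔ T := by
    rw [Submodule.map_sup, hS, hT]
  exact ⟨g, hE1 ▸ hg_sup hgA_map hgA1, hE2 ▸ hg_sup hgA_map hgA2, hE3 ▸ hg_sup hgA1 hgA2,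
    hgA, hgB1, hgB2⟩

theorem stmt12 (e : ℕ) (he : 0 < e) (E1 E2 E3 : Submodule ℂ (Fin (3 * e) → ℂ))
    (hd1 : finrank ℂ E1 = 2 * e) (hd2 : finrank ℂ E2 = 2 * e)
    (hd3 : finrank ℂ E3 = 2 * e)
    (h12 : finrank ℂ (E1 ⊓ E2 : Submodule ℂ (Fin (3 * e) → ℂ)) = e)
    (h13 : finrank ℂ (E1 ⊓ E3 : Submodule ℂ (Fin (3 * e) → ℂ)) = e)
    (h23 : finrank ℂ (E2 ⊓ E3 : Submodule ℂ (Fin (3 * e) → ℂ)) = e)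
    (h123 : E1 ⊓ E2 ⊓ E3 = ⊥)
    (B1 C1 B2 C2 : Submodule ℂ (Fin (3 * e) → ℂ))
    (hB1 : B1 ≤ E1) (hC1 : C1 ≤ E1) (hB2 : B2 ≤ E2) (hC2 : C2 ≤ E2)
    (hB1e : finrank ℂ B1 = e) (hC1e : finrank ℂ C1 = e)
    (hB2e : finrank ℂ B2 = e) (hC2e : finrank ℂ C2 = e)
    (hB1A : B1 ⊓ (E1 ⊓ E2) = ⊥) (hB1A1 : B1 ⊓ (E1 ⊓ E3) = ⊥)
    (hB2A : B2 ⊓ (E1 ⊓ E2) = ⊥) (hB2A2 : B2 ⊓ (E2 ⊓ E3) = ⊥)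
    (hC1A : C1 ⊓ (E1 ⊓ E2) = ⊥) (hC1A1 : C1 ⊓ (E1 ⊓ E3) = ⊥)
    (hC2A : C2 ⊓ (E1 ⊓ E2) = ⊥) (hC2A2 : C2 ⊓ (E2 ⊓ E3) = ⊥) :
    ∃ g : (Fin (3 * e) → ℂ) ≃ₗ[ℂ] (Fin (3 * e) → ℂ),
      E1.map g.toLinearMap = E1 ∧ E2.map g.toLinearMap = E2 ∧
        E3.map g.toLinearMap = E3 ∧
        (∀ x ∈ E1 ⊓ E2, g x = x) ∧
        B1.map g.toLinearMap = C1 ∧ B2.map g.toLinearMap = C2 :=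
  stmt12_general e he E1 E2 E3 hd1 hd2 hd3 h12 h13 h23 h123 B1 C1 B2 C2 hB1 hC1 hB2 hC2 hB1e hC1e
    hB2e hC2e hB1A hB1A1 hB2A hB2A2 hC1A hC1A1 hC2A hC2A2
end
end

section
/- Let d, r, s be positive integers with s > r. For an rd×sd complex matrix M regarded as an r×s array of d×d blocks, write M = (A B) where A is the left rd×rd square submatrix and B the remaining rd×(s−r)d part, assume A is invertible, and set φ(M) := A^{-1}B with d×d blocks φ(M)_{ij} for i = 1,…,r and j = 1,…,s−r. For 2 ≤ i ≤ r and 2 ≤ j ≤ s−r define G_{ij}(M) := φ(M)_{11} · φ(M)_{i1}^{-1} · φ(M)_{ij} · φ(M)_{1j}^{-1}, whenever φ(M)_{i1} and φ(M)_{1j} are invertible. Then for every g ∈ GL_{rd}(ℂ) and every block-diagonal matrix H = diag(h_1,…,h_s) with h_k ∈ GL_d(ℂ), whenever both sides are defined one has G_{ij}(g·M·H) = h_1^{-1} · G_{ij}(M) · h_1. -/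
noncomputable section

/-- The left `rd × rd` square part `A` of an `rd × sd` matrix `M = (A B)`
written in `d × d` blocks. -/
def Asq {d r s : ℕ} (hrs : r ≤ s) (M : Matrix (Fin r × Fin d) (Fin s × Fin d) ℂ) :
    Matrix (Fin r × Fin d) (Fin r × Fin d) ℂ :=
  Matrix.of fun p q => M p (Fin.castLE hrs q.1, q.2)

/-- The column index `r + j` (0-based) of the `j`-th block column of `B`. -/
def colIdx (r s : ℕ) (j : Fin (s - r)) : Fin s :=
  ⟨r + j, by have := j.isLt; omega⟩

/-- The `d × d` block of `φ(M) = A⁻¹ B` in block row `i` and block column `j`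
(both 0-based). -/
def Phiblk {d r s : ℕ} (hrs : r ≤ s) (M : Matrix (Fin r × Fin d) (Fin s × Fin d) ℂ)
    (i : Fin r) (j : Fin (s - r)) : Matrix (Fin d) (Fin d) ℂ :=
  Matrix.of fun a b => ((Asq hrs M)⁻¹ * M) (i, a) (colIdx r s j, b)

/-- `G_{ij}(M) = φ(M)₁₁ · φ(M)ᵢ₁⁻¹ · φ(M)ᵢⱼ · φ(M)₁ⱼ⁻¹` (0-based indices:
the paper's indices `2 ≤ i ≤ r`, `2 ≤ j ≤ s-r` correspond to `i ≠ 0`, `j ≠ 0`). -/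
def Gmap {d r s : ℕ} (hrs : r ≤ s) (hr : 0 < r) (hsr : 0 < s - r)
    (M : Matrix (Fin r × Fin d) (Fin s × Fin d) ℂ) (i : Fin r) (j : Fin (s - r)) :
    Matrix (Fin d) (Fin d) ℂ :=
  Phiblk hrs M ⟨0, hr⟩ ⟨0, hsr⟩ * (Phiblk hrs M i ⟨0, hsr⟩)⁻¹ *
    Phiblk hrs M i j * (Phiblk hrs M ⟨0, hr⟩ j)⁻¹

/-- The `sd × sd` block-diagonal matrix `diag (h 0, …, h (s-1))`. -/
def blockDiag {s d : ℕ} (h : Fin s → Matrix (Fin d) (Fin d) ℂ) :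
    Matrix (Fin s × Fin d) (Fin s × Fin d) ℂ :=
  Matrix.of fun p q => if p.1 = q.1 then h p.1 p.2 q.2 else 0

/-! Over the ring `R` of `d × d` matrices `M = (A B)` is an ordinary `r × s` matrix and `H` is
diagonal, so `G` only involves the algebra of a noncommutative ring. Left multiplication by `g`
cancels in `A⁻¹ B`, and `H` turns `X = A⁻¹ B` into `D₁⁻¹ X D₂` with `D₁`, `D₂` diagonal. In the
alternating product `X₁₁ Xᵢ₁⁻¹ Xᵢⱼ X₁ⱼ⁻¹` all the diagonal entries then telescope except those of
the first row, `h₁⁻¹` on the left and `h₁` on the right. -/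

open Matrix hiding blockDiag
open scoped Ring

section RingInverse

variable {M₀ N₀ : Type*} [MonoidWithZero M₀] [MonoidWithZero N₀]

theorem map_ringInverse_of_isUnit {F : Type*} [FunLike F M₀ N₀] [MonoidHomClass F M₀ N₀] (f : F)
    {a : M₀} (ha : IsUnit a) : f a⁻¹ʳ = (f a)⁻¹ʳ := by
  rw [← (ha.map f).mul_right_inj, Ring.mul_inverse_cancel _ (ha.map f), ← map_mul,
    Ring.mul_inverse_cancel _ ha, map_one]

theorem mulEquiv_map_ringInverse (e : M₀ ≃* N₀) (a : M₀) : e a⁻¹ʳ = (e a)⁻¹ʳ := by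
  by_cases ha : IsUnit a
  · exact map_ringInverse_of_isUnit e ha
  · rw [Ring.inverse_non_unit _ ha, Ring.inverse_non_unit _ (mt (MulEquiv.isUnit_map e).1 ha),
      map_zero]

theorem ringInverse_mul_mul {a b : M₀} (ha : IsUnit a) (hb : IsUnit b) (x : M₀) :
    (a * x * b)⁻¹ʳ = b⁻¹ʳ * x⁻¹ʳ * a⁻¹ʳ := by
  rw [Ring.inverse_mul (.inr hb), Ring.inverse_mul (.inl ha), mul_assoc]

end RingInverse

section Matrix

variable {m n R : Type*} [Fintype m] [DecidableEq m] [Semiring R]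

theorem isUnit_diagonal_of_isUnit {u : m → R} (hu : ∀ k, IsUnit (u k)) : IsUnit (diagonal u) :=
  (Pi.isUnit_iff.2 hu).map (diagonalRingHom m R)

theorem ringInverse_diagonal {u : m → R} (hu : ∀ k, IsUnit (u k)) :
    (diagonal u)⁻¹ʳ = diagonal fun k => (u k)⁻¹ʳ := by
  have hmul : diagonal u * diagonal (fun k => (u k)⁻¹ʳ) = 1 := by
    simp only [diagonal_mul_diagonal, Ring.mul_inverse_cancel _ (hu _), diagonal_one]
  rw [← (isUnit_diagonal_of_isUnit hu).mul_right_inj, hmul,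
    Ring.mul_inverse_cancel _ (isUnit_diagonal_of_isUnit hu)]

/-- The matrix `A⁻¹ B` of a matrix `M = (A B)` with square left part `A`: the affine coordinates
of the row space of `M` in the standard chart of the Grassmannian. It is `0` when `A` is not
invertible. -/
def grassmannChart (M : Matrix m (m ⊕ n) R) : Matrix m n R :=
  M.toCols₁⁻¹ʳ * M.toCols₂

theorem grassmannChart_mul {g : Matrix m m R} (hg : IsUnit g) (M : Matrix m (m ⊕ n) R) :
    grassmannChart (g * M) = grassmannChart M := by
  calc (g * M.toCols₁)⁻¹ʳ * (g * M.toCols₂)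
      = M.toCols₁⁻¹ʳ * (g⁻¹ʳ * g) * M.toCols₂ := by
        rw [Ring.inverse_mul (.inl hg)]
        simp only [Matrix.mul_assoc]
    _ = M.toCols₁⁻¹ʳ * M.toCols₂ := by
        rw [Ring.inverse_mul_cancel _ hg, Matrix.mul_one]

theorem grassmannChart_mul_diagonal [Fintype n] [DecidableEq n] (M : Matrix m (m ⊕ n) R)
    {h : m ⊕ n → R} (hh : ∀ k, IsUnit (h (.inl k))) :
    grassmannChart (M * diagonal h) =
      diagonal (fun k => (h (.inl k))⁻¹ʳ) * grassmannChart M * diagonal (fun k => h (.inr k)) := by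
  have h₁ : (M * diagonal h).toCols₁ = M.toCols₁ * diagonal fun k => h (.inl k) := by
    ext; simp only [toCols₁_apply, mul_diagonal]
  have h₂ : (M * diagonal h).toCols₂ = M.toCols₂ * diagonal fun k => h (.inr k) := by
    ext; simp only [toCols₂_apply, mul_diagonal]
  rw [grassmannChart, grassmannChart, h₁, h₂,
    Ring.inverse_mul (.inr (isUnit_diagonal_of_isUnit hh)), ringInverse_diagonal hh]
  simp only [Matrix.mul_assoc]

end Matrix

section CrossRatio

variable {m n R : Type*}

/-- The noncommutative cross-ratio `X₀₀ Xᵢ₀⁻¹ Xᵢⱼ X₀ⱼ⁻¹` of the entries of `X` in the rows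
`i₀, i` and the columns `j₀, j`, with `⁻¹ʳ` as inverse, so that it is `0` unless `X i j₀` and
`X i₀ j` are invertible. -/
def crossRatio [MonoidWithZero R] (X : Matrix m n R) (i₀ i : m) (j₀ j : n) : R :=
  X i₀ j₀ * (X i j₀)⁻¹ʳ * X i j * (X i₀ j)⁻¹ʳ

variable [Fintype m] [DecidableEq m] [Fintype n] [DecidableEq n] [Semiring R]

theorem crossRatio_diagonal_mul_mul_diagonal (X : Matrix m n R) {a : m → R} {b : n → R}
    (ha : ∀ k, IsUnit (a k)) (hb : ∀ k, IsUnit (b k)) (i₀ i : m) (j₀ j : n) :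
    crossRatio (diagonal a * X * diagonal b) i₀ i j₀ j =
      a i₀ * crossRatio X i₀ i j₀ j * (a i₀)⁻¹ʳ := by
  simp only [crossRatio, mul_diagonal, diagonal_mul, ringInverse_mul_mul (ha _) (hb _)]
  simp only [mul_assoc, Ring.mul_inverse_cancel_left _ _ (hb _),
    Ring.inverse_mul_cancel_left _ _ (ha _)]

theorem stmt14_general (M : Matrix m (m ⊕ n) R) (i₀ i : m) (j₀ j : n)
    (hA : IsUnit M.toCols₁) (hij₀ : IsUnit (grassmannChart M i j₀))
    (hi₀j : IsUnit (grassmannChart M i₀ j)) {g : Matrix m m R} (hg : IsUnit g)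
    {h : m ⊕ n → R} (hh : ∀ k, IsUnit (h k)) :
    crossRatio (grassmannChart (g * M * diagonal h)) i₀ i j₀ j =
      (h (.inl i₀))⁻¹ʳ * crossRatio (grassmannChart M) i₀ i j₀ j * h (.inl i₀) := by
  rw [grassmannChart_mul_diagonal _ (fun _ => hh _), grassmannChart_mul hg,
    crossRatio_diagonal_mul_mul_diagonal _ (fun _ => (hh _).ringInverse) (fun _ => hh _),
    Ring.inverse_inverse (hh _)]

end CrossRatio

section Comp

variable {I J K P R : Type*} [Fintype J] [Fintype K]

theorem comp_symm_mul [NonUnitalNonAssocSemiring R] (M : Matrix (I × K) (J × K) R)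
    (N : Matrix (J × K) (P × K) R) :
    (comp I P K K R).symm (M * N) = (comp I J K K R).symm M * (comp J P K K R).symm N := by
  ext
  simp only [comp_symm_apply, mul_apply, Matrix.sum_apply, Fintype.sum_prod_type]

variable [DecidableEq J] [DecidableEq K]

theorem isUnit_comp_symm [Semiring R] {A : Matrix (J × K) (J × K) R} :
    IsUnit ((comp J J K K R).symm A) ↔ IsUnit A :=
  MulEquiv.isUnit_map (compRingEquiv J K R).symm

theorem comp_symm_inv [CommRing R] (A : Matrix (J × K) (J × K) R) :
    (comp J J K K R).symm A⁻¹ = ((comp J J K K R).symm A)⁻¹ʳ := by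
  rw [nonsing_inv_eq_ringInverse]
  exact mulEquiv_map_ringInverse (compRingEquiv J K R).symm.toMulEquiv A

end Comp

section Blocks

variable {d r s : ℕ}

theorem blockDiag_eq_comp (h : Fin s → Matrix (Fin d) (Fin d) ℂ) :
    blockDiag h = comp _ _ _ _ ℂ (diagonal h) := by
  ext p q
  simp only [blockDiag, of_apply, comp_apply, diagonal_apply]
  split_ifs <;> rfl

/-- The position in an `r × s` block array `(A B)` of a block column of `A` or of `B`. -/
def blockCol (hrs : r ≤ s) : Fin r ⊕ Fin (s - r) → Fin s :=
  Sum.elim (Fin.castLE hrs) (colIdx r s)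

/-- An `rd × sd` matrix `M = (A B)` as a matrix over the ring of `d × d` matrices, with the block
columns of `A` separated from those of `B`. -/
def blocks (hrs : r ≤ s) (M : Matrix (Fin r × Fin d) (Fin s × Fin d) ℂ) :
    Matrix (Fin r) (Fin r ⊕ Fin (s - r)) (Matrix (Fin d) (Fin d) ℂ) :=
  ((comp _ _ _ _ ℂ).symm M).submatrix id (blockCol hrs)

theorem blocks_mul_mul_blockDiag (hrs : r ≤ s) (g : Matrix (Fin r × Fin d) (Fin r × Fin d) ℂ)
    (M : Matrix (Fin r × Fin d) (Fin s × Fin d) ℂ) (h : Fin s → Matrix (Fin d) (Fin d) ℂ) :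
    blocks hrs (g * M * blockDiag h) =
      (comp _ _ _ _ ℂ).symm g * blocks hrs M * diagonal (h ∘ blockCol hrs) := by
  rw [blocks, comp_symm_mul, comp_symm_mul, blockDiag_eq_comp, Equiv.symm_apply_apply]
  ext1 i k
  simp only [submatrix_apply, mul_diagonal, Function.comp_apply]
  rfl

theorem isUnit_toCols₁_blocks {hrs : r ≤ s} {M : Matrix (Fin r × Fin d) (Fin s × Fin d) ℂ} :
    IsUnit (blocks hrs M).toCols₁ ↔ IsUnit (Asq hrs M) :=
  isUnit_comp_symm (A := Asq hrs M)

theorem Phiblk_eq_grassmannChart (hrs : r ≤ s) (M : Matrix (Fin r × Fin d) (Fin s × Fin d) ℂ)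
    (i : Fin r) (j : Fin (s - r)) : Phiblk hrs M i j = grassmannChart (blocks hrs M) i j := by
  calc Phiblk hrs M i j
      = (comp _ _ _ _ ℂ).symm ((Asq hrs M)⁻¹ * M) i (colIdx r s j) := rfl
    _ = (((comp _ _ _ _ ℂ).symm (Asq hrs M))⁻¹ʳ * (comp _ _ _ _ ℂ).symm M) i (colIdx r s j) := by
        rw [comp_symm_mul, comp_symm_inv]
    _ = grassmannChart (blocks hrs M) i j := rfl

theorem Gmap_eq_crossRatio (hrs : r ≤ s) (hr : 0 < r) (hsr : 0 < s - r)
    (M : Matrix (Fin r × Fin d) (Fin s × Fin d) ℂ) (i : Fin r) (j : Fin (s - r)) :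
    Gmap hrs hr hsr M i j = crossRatio (grassmannChart (blocks hrs M)) ⟨0, hr⟩ i ⟨0, hsr⟩ j := by
  simp only [Gmap, crossRatio, Phiblk_eq_grassmannChart, nonsing_inv_eq_ringInverse]

end Blocks

theorem stmt14 (d r s : ℕ) (hd : 0 < d) (hr : 0 < r) (hs : r < s)
    (M : Matrix (Fin r × Fin d) (Fin s × Fin d) ℂ)
    (i : Fin r) (j : Fin (s - r)) (hi : i ≠ ⟨0, hr⟩) (hj : j ≠ ⟨0, by omega⟩)
    (hA : IsUnit (Asq hs.le M))
    (hi1 : IsUnit (Phiblk hs.le M i ⟨0, by omega⟩))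
    (h1j : IsUnit (Phiblk hs.le M ⟨0, hr⟩ j))
    (g : Matrix (Fin r × Fin d) (Fin r × Fin d) ℂ) (hg : IsUnit g)
    (h : Fin s → Matrix (Fin d) (Fin d) ℂ) (hh : ∀ t, IsUnit (h t)) :
    Gmap hs.le hr (by omega) (g * M * blockDiag h) i j =
      (h ⟨0, by omega⟩)⁻¹ * Gmap hs.le hr (by omega) M i j * h ⟨0, by omega⟩ := by
  rw [Phiblk_eq_grassmannChart] at hi1 h1j
  rw [Gmap_eq_crossRatio, Gmap_eq_crossRatio, blocks_mul_mul_blockDiag, nonsing_inv_eq_ringInverse]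
  exact stmt14_general _ _ _ _ _ (isUnit_toCols₁_blocks.2 hA) hi1 h1j (isUnit_comp_symm.2 hg)
    fun _ => hh _
end
end

section
/- Let z_1, z_2, z_3, z_4 ∈ ℂ be pairwise distinct, and let M be the 2×4 complex matrix whose first row is (1,1,1,1) and whose second row is (z_1,z_2,z_3,z_4). With d = 1, r = 2, s = 4, and G_{22} defined by G_{22}(M) = φ(M)_{11} φ(M)_{21}^{-1} φ(M)_{22} φ(M)_{12}^{-1} where φ(M) = A^{-1}B for M = (A B) with A the left 2×2 part, one has G_{22}(M) = ((z_2−z_3)/(z_1−z_3)) · ((z_1−z_4)/(z_2−z_4)), i.e. G_{22}(M) is the classical cross-ratio of z_1, z_2, z_3, z_4. -/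
noncomputable section

/-!
By Cramer's rule, every entry of `A⁻¹ M` is a quotient of two maximal minors of `M`: the numerator
comes from replacing one column of `A` by a column of `M`, and the denominator is `det A`. When
`d = 1` the four denominators in `G_{ij}` cancel, leaving a cross-ratio of Plücker coordinates. If
moreover the rows of `M` are `(1, …, 1)` and `(z_k)`, the minor of columns `k, l` is `z_l - z_k`.
-/

open Matrix Function

section Plucker

variable {m n : Type*} [Fintype m] [DecidableEq m]

/-- The Plücker coordinate of `M` at the columns `c`: the maximal minor of `M` with these columns,
taken in the order given by `c`, so that it is alternating in `c`. -/
def pluckerCoord {R : Type*} [CommRing R] (M : Matrix m n R) (c : m → n) : R :=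
  (M.submatrix id c).det

theorem pluckerCoord_update {R : Type*} [CommRing R] (M : Matrix m n R) (c : m → n) (p : m)
    (k : n) :
    pluckerCoord M (update c p k) = cramer (M.submatrix id c) (M.col k) p := by
  rw [cramer_apply, pluckerCoord]
  congr 1
  ext q l
  by_cases hl : l = p <;> simp [hl]

theorem inv_submatrix_mul_apply {K : Type*} [Field K] (M : Matrix m n K) (c : m → n) (p : m)
    (k : n) :
    ((M.submatrix id c)⁻¹ * M) p k = pluckerCoord M (update c p k) / pluckerCoord M c := by
  calc
    ((M.submatrix id c)⁻¹ * M) p k = ((M.submatrix id c)⁻¹ *ᵥ M.col k) p := rfl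
    _ = (pluckerCoord M c)⁻¹ * cramer (M.submatrix id c) (M.col k) p := by
      rw [inv_def, smul_mulVec, ← cramer_eq_adjugate_mulVec, Ring.inverse_eq_inv', Pi.smul_apply,
        smul_eq_mul, pluckerCoord]
    _ = pluckerCoord M (update c p k) / pluckerCoord M c := by
      rw [pluckerCoord_update, div_eq_inv_mul]

end Plucker

theorem pluckerCoord_fin_two {n R : Type*} [CommRing R] (M : Matrix (Fin 2 × Fin 1) n R)
    (c : Fin 2 × Fin 1 → n) :
    pluckerCoord M c =
      M (0, 0) (c (0, 0)) * M (1, 0) (c (1, 0)) - M (0, 0) (c (1, 0)) * M (1, 0) (c (0, 0)) := by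
  rw [pluckerCoord, ← det_submatrix_equiv_self (Equiv.prodUnique (Fin 2) (Fin 1)).symm,
    det_fin_two]
  rfl

theorem pluckerCoord_of_fst_row_eq_one {n R : Type*} [CommRing R]
    (M : Matrix (Fin 2 × Fin 1) n R) (hM : ∀ k, M (0, 0) k = 1) (c : Fin 2 × Fin 1 → n) :
    pluckerCoord M c = M (1, 0) (c (1, 0)) - M (1, 0) (c (0, 0)) := by
  simp only [pluckerCoord_fin_two, hM, one_mul]

theorem inv_apply_of_subsingleton {n K : Type*} [Subsingleton n] [Fintype n] [DecidableEq n]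
    [Field K] (N : Matrix n n K) (i j : n) : N⁻¹ i j = (N i j)⁻¹ := by
  rw [inv_subsingleton, Subsingleton.elim j i, diagonal_apply_eq, Ring.inverse_eq_inv']

section Blocks

variable {d r s : ℕ} (hrs : r ≤ s)

/-- The columns of `M` which make up its left square part `A`. -/
def leadingCols (p : Fin r × Fin d) : Fin s × Fin d :=
  (Fin.castLE hrs p.1, p.2)

theorem Phiblk_apply (M : Matrix (Fin r × Fin d) (Fin s × Fin d) ℂ) (i : Fin r) (j : Fin (s - r))
    (a b : Fin d) :
    Phiblk hrs M i j a b =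
      pluckerCoord M (update (leadingCols hrs) (i, a) (colIdx r s j, b)) /
        pluckerCoord M (leadingCols hrs) :=
  inv_submatrix_mul_apply M (leadingCols hrs) (i, a) (colIdx r s j, b)

theorem Gmap_apply_of_scalar_blocks (hr : 0 < r) (hsr : 0 < s - r)
    (M : Matrix (Fin r × Fin 1) (Fin s × Fin 1) ℂ) (i : Fin r) (j : Fin (s - r)) :
    Gmap hrs hr hsr M i j 0 0 =
      Phiblk hrs M ⟨0, hr⟩ ⟨0, hsr⟩ 0 0 * (Phiblk hrs M i ⟨0, hsr⟩ 0 0)⁻¹ *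
        Phiblk hrs M i j 0 0 * (Phiblk hrs M ⟨0, hr⟩ j 0 0)⁻¹ := by
  simp only [Gmap, mul_apply, Fin.sum_univ_one, inv_apply_of_subsingleton]

theorem Gmap_apply_eq_pluckerCoord (hr : 0 < r) (hsr : 0 < s - r)
    (M : Matrix (Fin r × Fin 1) (Fin s × Fin 1) ℂ) (hA : pluckerCoord M (leadingCols hrs) ≠ 0)
    (i : Fin r) (j : Fin (s - r)) :
    let p (i : Fin r) (j : Fin (s - r)) : ℂ :=
      pluckerCoord M (update (leadingCols hrs) (i, 0) (colIdx r s j, 0))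
    Gmap hrs hr hsr M i j 0 0 =
      p ⟨0, hr⟩ ⟨0, hsr⟩ / p i ⟨0, hsr⟩ * (p i j / p ⟨0, hr⟩ j) := by
  intro p
  have cancel (x y : ℂ) :
      x / pluckerCoord M (leadingCols hrs) * (y / pluckerCoord M (leadingCols hrs))⁻¹ = x / y := by
    rw [← div_eq_mul_inv, div_div_div_cancel_right₀ hA]
  rw [Gmap_apply_of_scalar_blocks, mul_assoc]
  simp only [Phiblk_apply, cancel, p]

end Blocks

theorem stmt16_general {s : ℕ} (hs : 2 < s) (z : Fin s → ℂ) (j : Fin (s - 2))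
    (h₀₁ : z ⟨0, by omega⟩ ≠ z ⟨1, by omega⟩) (h₀₂ : z ⟨0, by omega⟩ ≠ z ⟨2, hs⟩)
    (h₁ⱼ : z ⟨1, by omega⟩ ≠ z (colIdx 2 s j))
    (M : Matrix (Fin 2 × Fin 1) (Fin s × Fin 1) ℂ)
    (hM0 : ∀ (k : Fin s) (a b : Fin 1), M (0, a) (k, b) = 1)
    (hM1 : ∀ (k : Fin s) (a b : Fin 1), M (1, a) (k, b) = z k) :
    Gmap hs.le two_pos (Nat.sub_pos_of_lt hs) M 1 j 0 0 =
      ((z ⟨1, by omega⟩ - z ⟨2, hs⟩) / (z ⟨0, by omega⟩ - z ⟨2, hs⟩)) *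
        ((z ⟨0, by omega⟩ - z (colIdx 2 s j)) / (z ⟨1, by omega⟩ - z (colIdx 2 s j))) := by
  have snd_row (k : Fin s × Fin 1) : M (1, 0) k = z k.1 := hM1 k.1 0 k.2
  have minor_eq (c : Fin 2 × Fin 1 → Fin s × Fin 1) :
      pluckerCoord M c = z (c (1, 0)).1 - z (c (0, 0)).1 := by
    rw [pluckerCoord_of_fst_row_eq_one M fun k => hM0 k.1 0 k.2, snd_row, snd_row]
  have hA : pluckerCoord M (leadingCols hs.le) ≠ 0 := by
    rw [minor_eq]
    exact sub_ne_zero.2 h₀₁.symm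
  have replace_fst (k : Fin s) :
      pluckerCoord M (update (leadingCols hs.le) (0, 0) (k, 0)) = z ⟨1, by omega⟩ - z k :=
    minor_eq _
  have replace_snd (k : Fin s) :
      pluckerCoord M (update (leadingCols hs.le) (1, 0) (k, 0)) = z k - z ⟨0, by omega⟩ :=
    minor_eq _
  rw [Gmap_apply_eq_pluckerCoord hs.le two_pos (Nat.sub_pos_of_lt hs) M hA]
  calc
    _ = (z ⟨1, by omega⟩ - z ⟨2, hs⟩) / (z ⟨2, hs⟩ - z ⟨0, by omega⟩) *
        ((z (colIdx 2 s j) - z ⟨0, by omega⟩) / (z ⟨1, by omega⟩ - z (colIdx 2 s j))) :=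
      congrArg₂ _ (congrArg₂ _ (replace_fst _) (replace_snd _))
        (congrArg₂ _ (replace_snd _) (replace_fst _))
    _ = _ := by
      rw [div_mul_div_comm, div_mul_div_comm, div_eq_div_iff
        (mul_ne_zero (sub_ne_zero.2 h₀₂.symm) (sub_ne_zero.2 h₁ⱼ))
        (mul_ne_zero (sub_ne_zero.2 h₀₂) (sub_ne_zero.2 h₁ⱼ))]
      ring

/-- For `d = 1`, `r = 2`, `s = 4` and the matrix with rows `(1,1,1,1)` and
`(z₁,z₂,z₃,z₄)`, the invariant `G₂₂` is the classical cross-ratio. -/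
theorem stmt16 (z : Fin 4 → ℂ) (hz : Function.Injective z)
    (M : Matrix (Fin 2 × Fin 1) (Fin 4 × Fin 1) ℂ)
    (hM0 : ∀ (j : Fin 4) (a b : Fin 1), M (0, a) (j, b) = 1)
    (hM1 : ∀ (j : Fin 4) (a b : Fin 1), M (1, a) (j, b) = z j) :
    Gmap (d := 1) (r := 2) (s := 4) (by omega) (by omega) (by omega) M
        ⟨1, by omega⟩ ⟨1, by omega⟩ 0 0 =
      ((z 1 - z 2) / (z 0 - z 2)) * ((z 0 - z 3) / (z 1 - z 3)) := by
  exact stmt16_general (by omega) z 1 (hz.ne (by decide)) (hz.ne (by decide))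
    (hz.ne (by decide)) M hM0 hM1
end
end
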